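/- (Continuous variant of the Dulmage–Mendelsohn theorem) Let X and Y be compact metric spaces, μ_X ≥ μ'_X finite Borel measures on X and μ_Y ≥ μ'_Y finite Borel measures on Y, and E ⊂ X×Y a closed set. Suppose that for all Borel A ⊂ X and B ⊂ Y one has μ_Y(A^E) ≥ μ'_X(A) and μ_X(B^E) ≥ μ'_Y(B), where A^E = {y : ∃x∈A, (x,y)∈E} and B^E = {x : ∃y∈B, (x,y)∈E}. Then there exist measures μ̃_X, μ̃_Y with μ'_X ≤ μ̃_X ≤ μ_X, μ'_Y ≤ μ̃_Y ≤ μ_Y, and a coupling γ of μ̃_X and μ̃_Y with supp(γ) ⊂ E. -/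

import Mathlib

open MeasureTheory Metric Set

/-!
A closed relation `E ⊆ X × Y` is a span `X ← K → Y` of continuous maps `p`, `q` out of a compact
space. A finite measure on `K` is a positive functional on `C(K, ℝ)`, and the four bounds on its
marginals are linear inequalities for that functional. By Farkas' lemma they can be met as soon as
`∫ f ∂μX - ∫ f' ∂μX' + ∫ g ∂μY - ∫ g' ∂μY' ≥ 0` for all nonnegative bounded continuous functions
such that `u ∘ p + v ∘ q ≥ 0`, where `u = f - f'` and `v = g - g'`. As `μX' ≤ μX` and `μY' ≤ μY`,
the parts `f ⊓ f'` and `g ⊓ g'` can be cancelled, and what remains is `∫ u⁻ ∂μX' ≤ ∫ v⁺ ∂μY`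
together with `∫ v⁻ ∂μY' ≤ ∫ u⁺ ∂μX`. Since `u⁻ ∘ p ≤ v⁺ ∘ q` and `v⁻ ∘ q ≤ u⁺ ∘ p`, both follow by
applying the assumptions on sets to superlevel sets.
-/

open TopologicalSpace
open scoped BoundedContinuousFunction CompactlySupported NNReal

section Farkas

variable {V W : Type*} [AddCommGroup V] [Module ℝ V] [AddCommMonoid W] [PartialOrder W]
  [IsOrderedAddMonoid W] [Module ℝ W] [PosSMulMono ℝ W]

theorem exists_linearMap_forall_nonneg_le (T : W →ₗ[ℝ] V) (c : W →ₗ[ℝ] ℝ)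
    (hT : ∀ v, ∃ w, 0 ≤ w ∧ T w = v) (hc : ∀ w, 0 ≤ w → T w = 0 → 0 ≤ c w) :
    ∃ L : V →ₗ[ℝ] ℝ, ∀ w, 0 ≤ w → L (T w) ≤ c w := by
  let s : PointedCone ℝ (V × ℝ) := (PointedCone.positive ℝ W).map (T.prod c)
  let φ : (V × ℝ) →ₗ.[ℝ] ℝ :=
    ⟨Submodule.prod ⊥ ⊤, LinearMap.snd ℝ V ℝ ∘ₗ Submodule.subtype _⟩
  have φ_nonneg : ∀ x : φ.domain, (x : V × ℝ) ∈ s → 0 ≤ φ x := by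
    rintro ⟨_, hx⟩ ⟨w, hw, rfl⟩
    exact hc w hw hx.1
  have φ_dense : ∀ y, ∃ x : φ.domain, (x : V × ℝ) + y ∈ s := by
    rintro ⟨v, r⟩
    obtain ⟨w, hw, rfl⟩ := hT v
    exact ⟨⟨(0, c w - r), by simp [φ]⟩, w, hw, by simp⟩
  obtain ⟨G, hGφ, hGs⟩ := riesz_extension s φ φ_nonneg φ_dense
  refine ⟨-(G ∘ₗ LinearMap.inl ℝ V ℝ), fun w hw => ?_⟩
  have hG_snd : G (0, c w) = c w := hGφ ⟨(0, c w), by simp [φ]⟩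
  have hG_nonneg : 0 ≤ G (T w, c w) := hGs _ ⟨w, hw, rfl⟩
  have hG_add : G (T w, c w) = G (T w, 0) + G (0, c w) := by simp [← map_add]
  simp only [LinearMap.neg_apply, LinearMap.comp_apply, LinearMap.inl_apply]
  linarith

end Farkas

section BoundedContinuous

variable {X : Type*} [TopologicalSpace X]

instance : PosSMulMono ℝ (X →ᵇ ℝ) :=
  ⟨fun _ hc _ _ hfg x => mul_le_mul_of_nonneg_left (hfg x) hc⟩

/-- Precomposition with `p` as a linear map. The source consists of bounded functions because `X`
need not be compact. -/
noncomputable def pullback {K : Type*} [TopologicalSpace K] (p : C(K, X)) :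
    (X →ᵇ ℝ) →ₗ[ℝ] C(K, ℝ) :=
  (ContinuousMap.compRightAlgHom ℝ ℝ p).toLinearMap ∘ₗ
    BoundedContinuousFunction.toContinuousMapLinearMap X ℝ ℝ

@[simp]
lemma pullback_apply {K : Type*} [TopologicalSpace K] (p : C(K, X)) (f : X →ᵇ ℝ) (k : K) :
    pullback p f k = f (p k) :=
  rfl

variable [MeasurableSpace X]

/-- Integration against a finite measure as a linear functional on bounded continuous functions. -/
@[simps]
noncomputable def integralLinearMap [OpensMeasurableSpace X] (μ : Measure X) [IsFiniteMeasure μ] :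
    (X →ᵇ ℝ) →ₗ[ℝ] ℝ where
  toFun f := ∫ x, f x ∂μ
  map_add' f g := integral_add (f.integrable μ) (g.integrable μ)
  map_smul' c f := integral_const_mul c f

theorem measure_le_of_forall_integral_le [PseudoMetrizableSpace X] [BorelSpace X]
    {μ ν : Measure X} [IsFiniteMeasure μ] [IsFiniteMeasure ν]
    (h : ∀ f : X →ᵇ ℝ, 0 ≤ f → ∫ x, f x ∂μ ≤ ∫ x, f x ∂ν) : μ ≤ ν := by
  have lintegral_le (f : X →ᵇ ℝ≥0) : ∫⁻ x, f x ∂μ ≤ ∫⁻ x, f x ∂ν := by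
    rw [lintegral_coe_eq_integral _ (f.integrable_of_nnreal μ),
      lintegral_coe_eq_integral _ (f.integrable_of_nnreal ν)]
    exact ENNReal.ofReal_le_ofReal <|
      h (f.comp _ NNReal.isometry_coe.lipschitz) fun x => (f x).coe_nonneg
  have closed_le (F : Set X) (hF : IsClosed F) : μ F ≤ ν F :=
    ge_of_tendsto' (HasOuterApproxClosed.tendsto_lintegral_apprSeq hF ν) fun n =>
      (HasOuterApproxClosed.measure_le_lintegral hF μ n).trans (lintegral_le _)
  refine Measure.le_iff.2 fun s hs => ?_
  rw [hs.measure_eq_iSup_isClosed_of_ne_top (measure_ne_top μ s)]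
  exact iSup₂_le fun F hFs => iSup_le fun hF => (closed_le F hF).trans (measure_mono hFs)

theorem integral_posPart_sub_integral_negPart_le [OpensMeasurableSpace X] {μ μ' : Measure X}
    [IsFiniteMeasure μ] (hμ : μ' ≤ μ) {f f' : X →ᵇ ℝ} (hf : 0 ≤ f) (hf' : 0 ≤ f') :
    ∫ x, (f - f')⁺ x ∂μ - ∫ x, (f - f')⁻ x ∂μ' ≤ ∫ x, f x ∂μ - ∫ x, f' x ∂μ' := by
  have : IsFiniteMeasure μ' := isFiniteMeasure_of_le μ hμ
  have hf_eq : f = f ⊓ f' + (f - f')⁺ := by rw [inf_eq_sub_posPart_sub, sub_add_cancel]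
  have hf'_eq : f' = f ⊓ f' + (f - f')⁻ := by
    rw [← neg_sub f' f, negPart_neg, inf_comm, inf_eq_sub_posPart_sub, sub_add_cancel]
  have h_inf : ∫ x, (f ⊓ f') x ∂μ' ≤ ∫ x, (f ⊓ f') x ∂μ :=
    integral_mono_measure hμ (.of_forall (le_inf hf hf')) ((f ⊓ f').integrable μ)
  have h_add := congrArg (integralLinearMap μ) hf_eq
  have h_add' := congrArg (integralLinearMap μ') hf'_eq
  simp only [map_add, integralLinearMap_apply] at h_add h_add'
  linarith

end BoundedContinuous

theorem exists_isFiniteMeasure_forall_integral_eq {K : Type*} [TopologicalSpace K] [CompactSpace K]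
    [T2Space K] [MeasurableSpace K] [BorelSpace K] (L : C(K, ℝ) →ₗ[ℝ] ℝ)
    (hL : ∀ k, 0 ≤ k → 0 ≤ L k) :
    ∃ γ : Measure K, IsFiniteMeasure γ ∧ ∀ k : C(K, ℝ), ∫ z, k z ∂γ = L k := by
  let L' : C_c(K, ℝ) →ₗ[ℝ] ℝ :=
    { toFun := fun k => L k
      map_add' := fun k l => map_add L (k : C(K, ℝ)) l
      map_smul' := fun c k => map_smul L c (k : C(K, ℝ)) }
  let Λ : C_c(K, ℝ) →ₚ[ℝ] ℝ := PositiveLinearMap.mk₀ L' fun k hk => hL k hk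
  exact ⟨RealRMK.rieszMeasure Λ, inferInstance, fun k => RealRMK.integral_rieszMeasure Λ
    (CompactlySupportedContinuousMap.continuousMapEquiv k)⟩

section Hall

variable {K X Y : Type*} [MeasurableSpace X] [MeasurableSpace Y]

/-- Hall's marriage condition for the span `X ← K → Y`: the points of `Y` related to a measurable
set `A` of points of `X` have at least the measure of `A`. The related points form the set
`q '' (p ⁻¹' A)`, which need not be measurable, so that `ν` is used as an outer measure. -/
def HallCondition (p : K → X) (q : K → Y) (μ : Measure X) (ν : Measure Y) : Prop :=
  ∀ A, MeasurableSet A → μ A ≤ ν (q '' (p ⁻¹' A))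

namespace HallCondition

theorem lintegral_ofReal_le {p : K → X} {q : K → Y} {μ : Measure X} {ν : Measure Y}
    (h : HallCondition p q μ ν) {f : X → ℝ} {g : Y → ℝ} (hf : Measurable f) (hg : AEMeasurable g ν)
    (hf₀ : 0 ≤ f) (hg₀ : 0 ≤ g) (hfg : ∀ k, f (p k) ≤ g (q k)) :
    ∫⁻ x, ENNReal.ofReal (f x) ∂μ ≤ ∫⁻ y, ENNReal.ofReal (g y) ∂ν := by
  rw [lintegral_eq_lintegral_meas_le μ (.of_forall hf₀) hf.aemeasurable,
    lintegral_eq_lintegral_meas_le ν (.of_forall hg₀) hg]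
  refine lintegral_mono fun t => (h _ (measurableSet_le measurable_const hf)).trans ?_
  refine measure_mono ?_
  rintro _ ⟨k, hk, rfl⟩
  exact hk.trans (hfg k)

variable [TopologicalSpace X] [OpensMeasurableSpace X] [TopologicalSpace Y]
  [OpensMeasurableSpace Y]

theorem integral_le {p : K → X} {q : K → Y} {μ : Measure X} {ν : Measure Y} [IsFiniteMeasure μ]
    [IsFiniteMeasure ν] (h : HallCondition p q μ ν) {f : X →ᵇ ℝ} {g : Y →ᵇ ℝ} (hf : 0 ≤ f)
    (hg : 0 ≤ g) (hfg : ∀ k, f (p k) ≤ g (q k)) : ∫ x, f x ∂μ ≤ ∫ y, g y ∂ν := by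
  have g_integral_nonneg : 0 ≤ ∫ y, g y ∂ν := integral_nonneg hg
  rw [← ENNReal.ofReal_le_ofReal_iff g_integral_nonneg,
    ofReal_integral_eq_lintegral_ofReal (f.integrable μ) (.of_forall hf),
    ofReal_integral_eq_lintegral_ofReal (g.integrable ν) (.of_forall hg)]
  exact h.lintegral_ofReal_le f.continuous.measurable g.continuous.aemeasurable hf hg hfg

variable {μX μX' : Measure X} {μY μY' : Measure Y} [IsFiniteMeasure μX] [IsFiniteMeasure μY]

theorem integral_sub_add_integral_sub_nonneg {p : K → X} {q : K → Y} (hX : μX' ≤ μX)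
    (hY : μY' ≤ μY) (hXY : HallCondition p q μX' μY) (hYX : HallCondition q p μY' μX)
    {f f' : X →ᵇ ℝ} {g g' : Y →ᵇ ℝ} (hf : 0 ≤ f) (hf' : 0 ≤ f') (hg : 0 ≤ g) (hg' : 0 ≤ g')
    (h : ∀ k, 0 ≤ (f - f') (p k) + (g - g') (q k)) :
    0 ≤ (∫ x, f x ∂μX - ∫ x, f' x ∂μX') + (∫ y, g y ∂μY - ∫ y, g' y ∂μY') := by
  have : IsFiniteMeasure μX' := isFiniteMeasure_of_le μX hX
  have : IsFiniteMeasure μY' := isFiniteMeasure_of_le μY hY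
  have hXY_int : ∫ x, (f - f')⁻ x ∂μX' ≤ ∫ y, (g - g')⁺ y ∂μY :=
    hXY.integral_le (negPart_nonneg _) (posPart_nonneg _) fun k =>
      max_le_max_right 0 (neg_le_iff_add_nonneg'.2 (h k))
  have hYX_int : ∫ y, (g - g')⁻ y ∂μY' ≤ ∫ x, (f - f')⁺ x ∂μX :=
    hYX.integral_le (negPart_nonneg _) (posPart_nonneg _) fun k =>
      max_le_max_right 0 (neg_le_iff_add_nonneg.2 (h k))
  linarith [integral_posPart_sub_integral_negPart_le hX hf hf',
    integral_posPart_sub_integral_negPart_le hY hg hg']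

theorem exists_linearMap_integral_le [TopologicalSpace K] [CompactSpace K] {p : C(K, X)}
    {q : C(K, Y)} (hX : μX' ≤ μX) (hY : μY' ≤ μY) (hXY : HallCondition p q μX' μY)
    (hYX : HallCondition q p μY' μX) :
    ∃ L : C(K, ℝ) →ₗ[ℝ] ℝ, (∀ k, 0 ≤ k → 0 ≤ L k) ∧
      (∀ f, 0 ≤ f → ∫ x, f x ∂μX' ≤ L (pullback p f) ∧ L (pullback p f) ≤ ∫ x, f x ∂μX) ∧
      ∀ g, 0 ≤ g → ∫ y, g y ∂μY' ≤ L (pullback q g) ∧ L (pullback q g) ≤ ∫ y, g y ∂μY := by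
  have : IsFiniteMeasure μX' := isFiniteMeasure_of_le μX hX
  have : IsFiniteMeasure μY' := isFiniteMeasure_of_le μY hY
  -- The last component is a slack variable: it turns `0 ≤ u ∘ p + v ∘ q` into the equation
  -- `T w = 0`, and it makes `L` positive.
  let T : ((X →ᵇ ℝ) × (X →ᵇ ℝ)) × ((Y →ᵇ ℝ) × (Y →ᵇ ℝ)) × C(K, ℝ) →ₗ[ℝ] C(K, ℝ) :=
    ((pullback p).coprod (-pullback p)).coprod
      (((pullback q).coprod (-pullback q)).coprod (-LinearMap.id))
  let c : ((X →ᵇ ℝ) × (X →ᵇ ℝ)) × ((Y →ᵇ ℝ) × (Y →ᵇ ℝ)) × C(K, ℝ) →ₗ[ℝ] ℝ :=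
    ((integralLinearMap μX).coprod (-integralLinearMap μX')).coprod
      (((integralLinearMap μY).coprod (-integralLinearMap μY')).coprod 0)
  have exists_nonneg_eq (k : C(K, ℝ)) : ∃ w, 0 ≤ w ∧ T w = k := by
    refine ⟨((.const X ‖k‖, 0), (0, 0), .const K ‖k‖ - k), ?_, ?_⟩
    · refine ⟨⟨fun _ => norm_nonneg k, le_rfl⟩, le_rfl, fun z => ?_⟩
      simpa using (le_abs_self _).trans (k.norm_coe_le_norm z)
    · ext z
      simp [T]
  have c_nonneg : ∀ w, 0 ≤ w → T w = 0 → 0 ≤ c w := by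
    rintro ⟨⟨f, f'⟩, ⟨g, g'⟩, k⟩ ⟨⟨hf, hf'⟩, ⟨hg, hg'⟩, hk⟩ hT
    have h := integral_sub_add_integral_sub_nonneg hX hY hXY hYX hf hf' hg hg' fun z => by
      have hTz : (f - f') (p z) + (g - g') (q z) = k z := by
        simpa [T, sub_eq_add_neg, ← add_assoc, add_neg_eq_zero] using DFunLike.congr_fun hT z
      exact (hk z).trans_eq hTz.symm
    simpa [c, sub_eq_add_neg] using h
  obtain ⟨L, hL⟩ := exists_linearMap_forall_nonneg_le T c exists_nonneg_eq c_nonneg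
  refine ⟨L, fun k hk => ?_, fun f hf => ⟨?_, ?_⟩, fun g hg => ⟨?_, ?_⟩⟩
  · simpa [T, c] using hL ((0, 0), (0, 0), k) ⟨le_rfl, le_rfl, hk⟩
  · simpa [T, c] using hL ((0, f), (0, 0), 0) ⟨⟨le_rfl, hf⟩, le_rfl, le_rfl⟩
  · simpa [T, c] using hL ((f, 0), (0, 0), 0) ⟨⟨hf, le_rfl⟩, le_rfl, le_rfl⟩
  · simpa [T, c] using hL ((0, 0), (0, g), 0) ⟨le_rfl, ⟨le_rfl, hg⟩, le_rfl⟩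
  · simpa [T, c] using hL ((0, 0), (g, 0), 0) ⟨le_rfl, ⟨hg, le_rfl⟩, le_rfl⟩

end HallCondition

end Hall

theorem HallCondition.exists_measure_le_map_le {K X Y : Type*}
    [TopologicalSpace K] [CompactSpace K] [T2Space K] [MeasurableSpace K] [BorelSpace K]
    [TopologicalSpace X] [PseudoMetrizableSpace X] [MeasurableSpace X] [BorelSpace X]
    [TopologicalSpace Y] [PseudoMetrizableSpace Y] [MeasurableSpace Y] [BorelSpace Y]
    {μX μX' : Measure X} {μY μY' : Measure Y} [IsFiniteMeasure μX] [IsFiniteMeasure μY]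
    {p : C(K, X)} {q : C(K, Y)} (hX : μX' ≤ μX) (hY : μY' ≤ μY)
    (hXY : HallCondition p q μX' μY) (hYX : HallCondition q p μY' μX) :
    ∃ γ : Measure K, μX' ≤ γ.map p ∧ γ.map p ≤ μX ∧ μY' ≤ γ.map q ∧ γ.map q ≤ μY := by
  have : IsFiniteMeasure μX' := isFiniteMeasure_of_le μX hX
  have : IsFiniteMeasure μY' := isFiniteMeasure_of_le μY hY
  obtain ⟨L, L_nonneg, L_fst, L_snd⟩ := exists_linearMap_integral_le hX hY hXY hYX
  obtain ⟨γ, _, hγ⟩ := exists_isFiniteMeasure_forall_integral_eq L L_nonneg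
  have integral_map_fst (f : X →ᵇ ℝ) : ∫ x, f x ∂γ.map p = L (pullback p f) :=
    (integral_map p.continuous.aemeasurable f.continuous.aestronglyMeasurable).trans
      (hγ (pullback p f))
  have integral_map_snd (g : Y →ᵇ ℝ) : ∫ y, g y ∂γ.map q = L (pullback q g) :=
    (integral_map q.continuous.aemeasurable g.continuous.aestronglyMeasurable).trans
      (hγ (pullback q g))
  refine ⟨γ, ?_, ?_, ?_, ?_⟩ <;> refine measure_le_of_forall_integral_le fun h hh => ?_
  · exact (L_fst h hh).1.trans_eq (integral_map_fst h).symm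
  · exact (integral_map_fst h).trans_le (L_fst h hh).2
  · exact (L_snd h hh).1.trans_eq (integral_map_snd h).symm
  · exact (integral_map_snd h).trans_le (L_snd h hh).2

theorem continuous_dulmage_mendelsohn_general {X Y : Type*}
    [TopologicalSpace X] [MetrizableSpace X] [MeasurableSpace X] [BorelSpace X]
    [TopologicalSpace Y] [MetrizableSpace Y] [MeasurableSpace Y] [BorelSpace Y]
    [SecondCountableTopologyEither X Y] {μX μX' : Measure X} {μY μY' : Measure Y}
    [IsFiniteMeasure μX] [IsFiniteMeasure μY] (hX : μX' ≤ μX) (hY : μY' ≤ μY)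
    {E : Set (X × Y)} (hE : IsCompact E)
    (hA : ∀ A : Set X, MeasurableSet A → μX' A ≤ μY {y | ∃ x ∈ A, (x, y) ∈ E})
    (hB : ∀ B : Set Y, MeasurableSet B → μY' B ≤ μX {x | ∃ y ∈ B, (x, y) ∈ E}) :
    ∃ (μtX : Measure X) (μtY : Measure Y) (γ : Measure (X × Y)),
      μX' ≤ μtX ∧ μtX ≤ μX ∧ μY' ≤ μtY ∧ μtY ≤ μY ∧
      γ.map Prod.fst = μtX ∧ γ.map Prod.snd = μtY ∧ γ Eᶜ = 0 := by
  have : CompactSpace E := isCompact_iff_compactSpace.1 hE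
  let p : C(E, X) := ContinuousMap.fst.restrict E
  let q : C(E, Y) := ContinuousMap.snd.restrict E
  have hXY : HallCondition p q μX' μY := fun A hA_meas => (hA A hA_meas).trans <|
    measure_mono fun y ⟨x, hx, hxy⟩ => ⟨⟨(x, y), hxy⟩, hx, rfl⟩
  have hYX : HallCondition q p μY' μX := fun B hB_meas => (hB B hB_meas).trans <|
    measure_mono fun x ⟨y, hy, hxy⟩ => ⟨⟨(x, y), hxy⟩, hy, rfl⟩
  obtain ⟨γ, hγX, hγX', hγY, hγY'⟩ := HallCondition.exists_measure_le_map_le hX hY hXY hYX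
  refine ⟨γ.map p, γ.map q, γ.map (↑), hγX, hγX', hγY, hγY', ?_, ?_, ?_⟩
  · exact Measure.map_map measurable_fst measurable_subtype_coe
  · exact Measure.map_map measurable_snd measurable_subtype_coe
  · rw [Measure.map_apply measurable_subtype_coe hE.measurableSet.compl]
    simp

/-- Continuous variant of the Dulmage–Mendelsohn theorem. -/
theorem continuous_dulmage_mendelsohn
    {X Y : Type*} [MetricSpace X] [CompactSpace X] [MeasurableSpace X] [BorelSpace X]
    [MetricSpace Y] [CompactSpace Y] [MeasurableSpace Y] [BorelSpace Y]
    (μX μX' : Measure X) (μY μY' : Measure Y)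
    [IsFiniteMeasure μX] [IsFiniteMeasure μX'] [IsFiniteMeasure μY] [IsFiniteMeasure μY']
    (hX : μX' ≤ μX) (hY : μY' ≤ μY)
    (E : Set (X × Y)) (hE : IsClosed E)
    (hA : ∀ A : Set X, MeasurableSet A → μX' A ≤ μY {y | ∃ x ∈ A, (x, y) ∈ E})
    (hB : ∀ B : Set Y, MeasurableSet B → μY' B ≤ μX {x | ∃ y ∈ B, (x, y) ∈ E}) :
    ∃ (μtX : Measure X) (μtY : Measure Y) (γ : Measure (X × Y)),
      μX' ≤ μtX ∧ μtX ≤ μX ∧ μY' ≤ μtY ∧ μtY ≤ μY ∧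
      γ.map Prod.fst = μtX ∧ γ.map Prod.snd = μtY ∧ γ Eᶜ = 0 := by
  exact continuous_dulmage_mendelsohn_general hX hY hE.isCompact hA hB
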